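/- Let ρ be a metric on ℝⁿ whose induced topology coincides with the Euclidean topology, let 𝔹 be the closed Euclidean unit ball, write the identity map as id(x) = (π₁(x), …, πₙ(x)), and for ε > 0 and i = 1, …, n define π_i^ε(x) := min_{z ∈ 𝔹} [ π_i(z) + (1/ε) ρ(x,z) ] and F^ε := (π₁^ε, …, πₙ^ε) : 𝔹 → ℝⁿ. Then there exists ε > 0 such that F^ε(𝔹) has nonempty interior in ℝⁿ; more precisely, whenever sup_{x ∈ 𝔹} ‖F^ε(x) − x‖ ≤ 1/2, the open ball B(0, 1/2) is contained in F^ε(𝔹). -/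

import Mathlib

/-!
The bounds `‖y‖ ≤ 1 - δ` and `‖F x - x‖ ≤ δ` on the unit ball make `x ↦ y + x - F x` a continuous
self-map of the ball, and a fixed point of it is a solution of `F x = y`; so the covering property
is Brouwer's theorem. Its hypothesis holds for small `ε` because moving from `x` to a point `z` with
`f z ≤ f x - η` costs a `d x z` bounded below by compactness, which a large factor `1 / ε` makes too
expensive to pay off.

Brouwer's theorem is proved by the Milnor–Rogers argument. If `r` were a `C¹` retraction of the ball
onto its sphere, then `x ↦ x + t • (r x - x)` would be a diffeomorphism of the ball for small `t`,
so the integral of its Jacobian determinant, a polynomial in `t`, would be constantly the volume of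
the ball; but it vanishes at `t = 1`, because `r` has values in a sphere.
-/

open Set Metric MeasureTheory Filter Topology
open scoped Polynomial NNReal

section Polynomial

theorem exists_polynomial_eval_eq_det_one_add_smul {K V : Type*} [Field K] [AddCommGroup V]
    [Module K V] [FiniteDimensional K V] (A : V →ₗ[K] V) :
    ∃ p : K[X], p.natDegree ≤ Module.finrank K V ∧
      ∀ t, p.eval t = LinearMap.det (1 + t • A) := by
  set b := Module.finBasis K V
  set M := LinearMap.toMatrix b b A
  refine ⟨Matrix.det ((Polynomial.X : K[X]) • M.map Polynomial.C +
    (1 : Matrix _ _ K).map Polynomial.C), ?_, fun t ↦ ?_⟩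
  · exact (Polynomial.natDegree_det_X_add_C_le M 1).trans_eq (Fintype.card_fin _)
  · rw [← LinearMap.det_toMatrix b, ← Polynomial.coe_evalRingHom, RingHom.map_det]
    congr 1
    ext i j
    by_cases hij : i = j <;> simp [M, hij, LinearMap.toMatrix_one, add_comm, mul_comm t]

theorem exists_polynomial_eval_eq_integral {α : Type*} [MeasurableSpace α] {μ : Measure α}
    {p : α → ℝ[X]} {n : ℕ} (hdeg : ∀ x, (p x).natDegree ≤ n)
    (hint : ∀ t, Integrable (fun x ↦ (p x).eval t) μ) :
    ∃ P : ℝ[X], ∀ t, P.eval t = ∫ x, (p x).eval t ∂μ := by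
  set s := Finset.range (n + 1)
  have hinj : InjOn (fun k : ℕ ↦ (k : ℝ)) s := Nat.cast_injective.injOn
  have hinterp (x : α) (t : ℝ) :
      (p x).eval t = ∑ k ∈ s, (p x).eval (k : ℝ) * (Lagrange.basis s (↑) k).eval t := by
    have hlt : (p x).degree < s.card := by
      rw [Finset.card_range]
      exact Polynomial.degree_lt_iff_coeff_zero _ _ |>.2 fun m hm ↦
        Polynomial.coeff_eq_zero_of_natDegree_lt ((hdeg x).trans_lt hm)
    conv_lhs => rw [Lagrange.eq_interpolate hinj hlt, Lagrange.interpolate_apply]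
    simp only [Polynomial.eval_finsetSum, Polynomial.eval_mul, Polynomial.eval_C]
  refine ⟨Lagrange.interpolate s (↑) fun k ↦ ∫ x, (p x).eval (k : ℝ) ∂μ, fun t ↦ ?_⟩
  simp only [hinterp _ t]
  rw [integral_finsetSum _ fun (k : ℕ) _ ↦ (hint k).mul_const _]
  simp only [integral_mul_const, Lagrange.interpolate_apply, Polynomial.eval_finsetSum,
    Polynomial.eval_mul, Polynomial.eval_C]

theorem exists_polynomial_eval_eq_integral_det_one_add_smul {α V : Type*} [MeasurableSpace α]
    {μ : Measure α} [AddCommGroup V] [Module ℝ V] [FiniteDimensional ℝ V] {A : α → V →ₗ[ℝ] V}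
    (hint : ∀ t : ℝ, Integrable (fun x ↦ LinearMap.det (1 + t • A x)) μ) :
    ∃ P : ℝ[X], ∀ t, P.eval t = ∫ x, LinearMap.det (1 + t • A x) ∂μ := by
  choose p hdeg heval using fun x ↦ exists_polynomial_eval_eq_det_one_add_smul (A x)
  simp only [← heval] at hint ⊢
  exact exists_polynomial_eval_eq_integral hdeg hint

end Polynomial

theorem image_eq_self_of_isOpen_image {X : Type*} [TopologicalSpace X] [T2Space X] {f : X → X}
    {U : Set X} (hU : IsPreconnected U) (hcpt : IsCompact (closure U))
    (hf : ContinuousOn f (closure U)) (hmaps : MapsTo f U U)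
    (hboundary : MapsTo f (closure U \ U) Uᶜ) (hopen : IsOpen (f '' U)) : f '' U = U := by
  refine hmaps.image_subset.antisymm ?_
  rcases U.eq_empty_or_nonempty with rfl | ⟨x, hx⟩
  · exact empty_subset _
  refine hU.subset_of_closure_inter_subset hopen ⟨f x, hmaps hx, mem_image_of_mem f hx⟩ ?_
  rintro y ⟨hy, hyU⟩
  obtain ⟨z, hz, rfl⟩ :=
    closure_minimal (image_mono subset_closure) (hcpt.image_of_continuousOn hf).isClosed hy
  by_contra hzU
  exact hboundary ⟨hz, fun h ↦ hzU (mem_image_of_mem f h)⟩ hyU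

section Jacobian

variable {E : Type*} [NormedAddCommGroup E] [NormedSpace ℝ E] [FiniteDimensional ℝ E]

theorem det_one_add_pos_of_norm_lt_one {A : E →L[ℝ] E} (hA : ‖A‖ < 1) : 0 < (1 + A).det := by
  have : CompleteSpace E := FiniteDimensional.complete ℝ E
  have hne : ∀ s ∈ Icc (0 : ℝ) 1, (1 + s • A).det ≠ 0 := by
    intro s hs
    have hlt : ‖-(s • A)‖ < 1 := by
      rw [norm_neg, norm_smul, Real.norm_of_nonneg hs.1]
      exact (mul_le_of_le_one_left (norm_nonneg A) hs.2).trans_lt hA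
    have hu : IsUnit (1 + s • A) := by simpa using isUnit_one_sub_of_norm_lt_one hlt
    exact ((hu.map ContinuousLinearMap.toLinearMapRingHom).map LinearMap.det).ne_zero
  have hcont : Continuous fun s : ℝ ↦ (1 + s • A).det :=
    ContinuousLinearMap.continuous_det.comp (by fun_prop)
  have hdet_one : (1 : E →L[ℝ] E).det = 1 := LinearMap.det_id
  by_contra! hneg
  obtain ⟨s, hs, h0⟩ := intermediate_value_Icc' zero_le_one hcont.continuousOn
    (show (0 : ℝ) ∈ Icc _ _ by simpa [hdet_one] using hneg)
  exact hne s hs h0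

theorem bijOn_of_lipschitzOnWith_sub_id {f : E → E} {c : ℝ≥0} {U : Set E} (hc : c < 1)
    (hU : IsPreconnected U) (hUo : IsOpen U) (hUb : Bornology.IsBounded U)
    (hf : LipschitzOnWith c (f - id) (closure U)) (hmaps : MapsTo f U U)
    (hboundary : MapsTo f (frontier U) Uᶜ) : BijOn f U U := by
  have : CompleteSpace E := FiniteDimensional.complete ℝ E
  have happrox : ApproximatesLinearOn f (ContinuousLinearEquiv.refl ℝ E : E →L[ℝ] E)
      (closure U) c := hf.approximatesLinearOn
  have hc' : Subsingleton E ∨ c < ‖((ContinuousLinearEquiv.refl ℝ E).symm : E →L[ℝ] E)‖₊⁻¹ := by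
    rcases subsingleton_or_nontrivial E with h | h
    · exact .inl h
    · have hone : ‖((ContinuousLinearEquiv.refl ℝ E).symm : E →L[ℝ] E)‖₊ = 1 :=
        nnnorm_one (G := E →L[ℝ] E)
      exact .inr (by rwa [hone, inv_one])
  have happroxU := happrox.mono_set subset_closure
  have hopen : IsOpen (f '' U) :=
    happroxU.open_image (ContinuousLinearEquiv.toNonlinearRightInverse _) hUo hc'
  have himage := image_eq_self_of_isOpen_image hU hUb.isCompact_closure happrox.continuousOn
    hmaps (hUo.frontier_eq ▸ hboundary) hopen
  exact ⟨hmaps, happroxU.injOn hc', himage.superset⟩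

theorem bijOn_add_smul {v : E → E} {c : ℝ≥0} {U : Set E} {t : ℝ} (hU : Convex ℝ U)
    (hUo : IsOpen U) (hUb : Bornology.IsBounded U) (hlip : LipschitzOnWith c v (closure U))
    (hmaps : MapsTo (fun x ↦ x + v x) U (closure U)) (hboundary : EqOn v 0 (frontier U))
    (ht0 : 0 ≤ t) (ht1 : t < 1) (htc : t * c < 1) : BijOn (fun x ↦ x + t • v x) U U := by
  lift t to ℝ≥0 using ht0
  have hflip : LipschitzOnWith (t * c) ((fun x ↦ x + (t : ℝ) • v x) - id) (closure U) := by
    have : (fun x ↦ x + (t : ℝ) • v x) - id = fun x ↦ (t : ℝ) • v x := by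
      ext x
      exact add_sub_cancel_left _ _
    rw [this]
    refine LipschitzOnWith.of_dist_le_mul fun x hx y hy ↦ ?_
    rw [dist_smul₀, NNReal.coe_mul, mul_assoc, Real.norm_of_nonneg t.coe_nonneg]
    gcongr
    exact hlip.dist_le_mul x hx y hy
  refine bijOn_of_lipschitzOnWith_sub_id (by exact_mod_cast htc) hU.isPreconnected hUo hUb hflip
    (fun x hx ↦ ?_) fun x hx ↦ ?_
  · have hcombo := hU.combo_interior_closure_mem_interior (hUo.interior_eq.symm ▸ hx) (hmaps hx)
      (sub_pos.2 ht1) t.coe_nonneg (sub_add_cancel 1 _)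
    convert! interior_subset hcombo using 1
    module
  · simpa [hboundary hx] using (hUo.frontier_eq ▸ hx).2

theorem setIntegral_det_one_add_smul_fderiv [MeasurableSpace E] [BorelSpace E] (μ : Measure E)
    [μ.IsAddHaarMeasure] {v : E → E} {c : ℝ≥0} {U : Set E} {t : ℝ} (hU : Convex ℝ U)
    (hUo : IsOpen U) (hUb : Bornology.IsBounded U) (hv : DifferentiableOn ℝ v U)
    (hlip : LipschitzOnWith c v (closure U)) (hmaps : MapsTo (fun x ↦ x + v x) U (closure U))
    (hboundary : EqOn v 0 (frontier U)) (ht0 : 0 ≤ t) (ht1 : t < 1) (htc : t * c < 1) :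
    ∫ x in U, (1 + t • fderiv ℝ v x).det ∂μ = μ.real U := by
  have hbij := bijOn_add_smul hU hUo hUb hlip hmaps hboundary ht0 ht1 htc
  have hderiv : ∀ x ∈ U,
      HasFDerivWithinAt (fun x ↦ x + t • v x) (1 + t • fderiv ℝ v x) U x := fun x hx ↦
    ((hasFDerivAt_id x).add ((hv.hasFDerivAt (hUo.mem_nhds hx)).const_smul t)).hasFDerivWithinAt
  have hpos : ∀ x ∈ U, 0 < (1 + t • fderiv ℝ v x).det := fun x hx ↦ by
    refine det_one_add_pos_of_norm_lt_one ?_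
    have hle := norm_fderiv_le_of_lipschitzOn ℝ (hUo.mem_nhds hx) (hlip.mono subset_closure)
    rw [norm_smul, Real.norm_of_nonneg ht0]
    exact (mul_le_mul_of_nonneg_left hle ht0).trans_lt htc
  calc ∫ x in U, (1 + t • fderiv ℝ v x).det ∂μ
      = ∫ x in U, |(1 + t • fderiv ℝ v x).det| • (1 : ℝ) ∂μ :=
        setIntegral_congr_fun hUo.measurableSet fun x hx ↦ by
          simp only [abs_of_pos (hpos x hx), smul_eq_mul, mul_one]
    _ = ∫ _ in (fun x ↦ x + t • v x) '' U, (1 : ℝ) ∂μ :=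
        (integral_image_eq_integral_abs_det_fderiv_smul μ hUo.measurableSet hderiv hbij.injOn
          fun _ ↦ 1).symm
    _ = μ.real U := by rw [hbij.image_eq, setIntegral_const, smul_eq_mul, mul_one]

theorem setIntegral_det_fderiv_eq_measureReal [MeasurableSpace E] [BorelSpace E] (μ : Measure E)
    [μ.IsAddHaarMeasure] {r : E → E} {U : Set E} (hU : Convex ℝ U) (hUo : IsOpen U)
    (hUb : Bornology.IsBounded U) (hr : ContDiff ℝ 1 r) (hmaps : MapsTo r U (closure U))
    (hboundary : EqOn r id (frontier U)) : ∫ x in U, (fderiv ℝ r x).det ∂μ = μ.real U := by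
  set v : E → E := r - id with hv_def
  have hv : ContDiff ℝ 1 v := hr.sub contDiff_id
  obtain ⟨c, hlip⟩ := hv.contDiffOn.exists_lipschitzOnWith one_ne_zero hU.closure
    hUb.isCompact_closure
  have hint (t : ℝ) : IntegrableOn (fun x ↦ (1 + t • fderiv ℝ v x).det) U μ := by
    have hcont : Continuous fun x ↦ (1 + t • fderiv ℝ v x).det :=
      ContinuousLinearMap.continuous_det.comp
        (continuous_const.add ((hv.continuous_fderiv one_ne_zero).const_smul t))
    exact (hcont.continuousOn.integrableOn_compact hUb.isCompact_closure).mono_set subset_closure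
  obtain ⟨P, hP⟩ := exists_polynomial_eval_eq_integral_det_one_add_smul hint
  have hsmall : ∀ t ∈ Ioo (0 : ℝ) (1 / (1 + c)), P.eval t = μ.real U := by
    rintro t ⟨ht0, ht⟩
    rw [lt_div_iff₀ (by positivity)] at ht
    have htc : 0 ≤ t * c := by positivity
    exact (hP t).trans <| setIntegral_det_one_add_smul_fderiv μ hU hUo hUb
      (hv.differentiable one_ne_zero).differentiableOn hlip
      (fun x hx ↦ by simpa [hv_def] using hmaps hx) (fun x hx ↦ by simp [hv_def, hboundary hx])
      ht0.le (by linarith) (by linarith)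
  have hconst : P = Polynomial.C (μ.real U) :=
    Polynomial.eq_of_infinite_eval_eq _ _ <|
      (Ioo_infinite (show (0 : ℝ) < 1 / (1 + c) by positivity)).mono fun t ht ↦
        (hsmall t ht).trans Polynomial.eval_C.symm
  have hfderiv (x : E) : fderiv ℝ r x = 1 + (1 : ℝ) • fderiv ℝ v x := by
    rw [hv_def, fderiv_sub (hr.differentiable one_ne_zero x) differentiableAt_id, fderiv_id,
      one_smul]
    exact (add_sub_cancel _ _).symm
  simp only [hfderiv]
  exact (hP 1).symm.trans (by rw [hconst, Polynomial.eval_C])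

end Jacobian

section Brouwer

variable {E : Type*} [NormedAddCommGroup E] [InnerProductSpace ℝ E] [FiniteDimensional ℝ E]

theorem det_fderiv_eq_zero_of_norm_eventuallyEq_const {r : E → E} {x : E} {R : ℝ} (hR : R ≠ 0)
    (hr : DifferentiableAt ℝ r x) (hnorm : ∀ᶠ y in 𝓝 x, ‖r y‖ = R) : (fderiv ℝ r x).det = 0 := by
  have horth (w : E) : inner ℝ (r x) (fderiv ℝ r x w) = 0 := by
    have hsq : HasFDerivAt (fun y ↦ inner ℝ (r y) (r y)) (0 : E →L[ℝ] ℝ) x :=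
      (hasFDerivAt_const (R ^ 2) x).congr_of_eventuallyEq <| hnorm.mono fun y hy ↦ by
        dsimp only
        rw [real_inner_self_eq_norm_sq, hy]
    have hzero := DFunLike.congr_fun ((hr.hasFDerivAt.inner ℝ hr.hasFDerivAt).unique hsq) w
    simpa [real_inner_comm] using hzero
  by_contra hdet
  obtain ⟨w, hw⟩ := (LinearMap.equivOfDetNeZero (fderiv ℝ r x : E →ₗ[ℝ] E) hdet).surjective (r x)
  have hself : inner ℝ (r x) (r x) = 0 := by simpa [← hw] using horth w
  exact hR (by rw [← hnorm.self_of_nhds, inner_self_eq_zero.1 hself, norm_zero])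

theorem not_eqOn_id_sphere_of_contDiff {r : E → E} {R : ℝ} (hR : 0 < R) (hr : ContDiff ℝ 1 r)
    (hmaps : MapsTo r (closedBall 0 R) (sphere 0 R)) : ¬ EqOn r id (sphere 0 R) := by
  intro hid
  borelize E
  set μ : Measure E := Measure.addHaar
  have hvolume : ∫ x in ball 0 R, (fderiv ℝ r x).det ∂μ = μ.real (ball 0 R) := by
    refine setIntegral_det_fderiv_eq_measureReal μ (convex_ball 0 R) isOpen_ball isBounded_ball hr
      ?_ (by rwa [frontier_ball 0 hR.ne'])
    rw [closure_ball 0 hR.ne']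
    exact hmaps.mono ball_subset_closedBall sphere_subset_closedBall
  have hzero : ∫ x in ball 0 R, (fderiv ℝ r x).det ∂μ = 0 := by
    refine setIntegral_eq_zero_of_forall_eq_zero fun x hx ↦
      det_fderiv_eq_zero_of_norm_eventuallyEq_const hR.ne' (hr.differentiable one_ne_zero x) ?_
    filter_upwards [isOpen_ball.mem_nhds hx] with y hy
    exact mem_sphere_zero_iff_norm.1 (hmaps (ball_subset_closedBall hy))
  have hmeasure := hvolume.symm.trans hzero
  rw [measureReal_eq_zero_iff measure_ball_lt_top.ne] at hmeasure
  exact (measure_ball_pos μ 0 hR).ne' hmeasure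

theorem exists_isFixedPt_of_hasCompactSupport {g : E → E} (hg : Continuous g)
    (hsupp : HasCompactSupport g) : ∃ x, Function.IsFixedPt g x := by
  by_contra! hfix
  have hpos (x : E) : 0 < ‖g x - x‖ := norm_pos_iff.2 (sub_ne_zero.2 (hfix x))
  obtain ⟨k, hk, hclose, hsub⟩ := hg.exists_contDiff_approx 1 (hg.sub continuous_id).norm hpos
  have hne (x : E) : x - k x ≠ 0 := fun h ↦ by
    have hlt := hclose x
    rw [← sub_eq_zero.1 h, dist_eq_norm, norm_sub_rev] at hlt
    exact lt_irrefl _ hlt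
  obtain ⟨R, hR, hsR⟩ := hsupp.isCompact.isBounded.subset_ball_lt 0 0
  have hsmooth : ContDiff ℝ 1 fun x ↦ x - k x := contDiff_id.sub hk
  have hnorm (x : E) : ‖(R / ‖x - k x‖) • (x - k x)‖ = R := by
    rw [norm_smul, norm_div, norm_norm, div_mul_cancel₀ _ (norm_ne_zero_iff.2 (hne x)),
      Real.norm_of_nonneg hR.le]
  -- Off the support of `k` the displacement `x - k x` is `x` itself, so rescaling it to length `R`
  -- gives a retraction onto the sphere.
  refine not_eqOn_id_sphere_of_contDiff hR (r := fun x ↦ (R / ‖x - k x‖) • (x - k x))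
    ((contDiff_const.div (hsmooth.norm ℝ hne) fun x ↦ norm_ne_zero_iff.2 (hne x)).smul hsmooth)
    (fun x _ ↦ mem_sphere_zero_iff_norm.2 (hnorm x)) fun x hx ↦ ?_
  have hkx : k x = 0 := by
    by_contra h
    exact (mem_ball.1 (hsR (subset_tsupport g (hsub h)))).ne hx
  simp [hkx, mem_sphere_zero_iff_norm.1 hx, hR.ne']

theorem exists_isFixedPt_of_mapsTo_closedBall {f : E → E} {c : E} {r : ℝ} (hr : 0 < r)
    (hf : ContinuousOn f (closedBall c r)) (hmaps : MapsTo f (closedBall c r) (closedBall c r)) :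
    ∃ x ∈ closedBall c r, Function.IsFixedPt f x := by
  have := Metric.instTietzeExtensionClosedBall ℝ c hr
  obtain ⟨G, hG⟩ := ContinuousMap.exists_restrict_eq isClosed_closedBall
    (⟨hmaps.restrict, hf.mapsToRestrict hmaps⟩ : C(closedBall c r, closedBall c r))
  obtain ⟨χ, hχ_one, -, hχ_supp, hχ_mem⟩ := exists_continuous_one_zero_of_isCompact
    (isCompact_closedBall (0 : E) r) isClosed_empty (disjoint_empty _)
  obtain ⟨x, hx⟩ := exists_isFixedPt_of_hasCompactSupport
    (g := fun x ↦ χ x • ((G (c + x) : E) - c)) (by fun_prop) hχ_supp.smul_right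
  -- The cutoff creates no new fixed point: since `0 ≤ χ ≤ 1`, a fixed point lies where `χ = 1`.
  have hxr : x ∈ closedBall 0 r := by
    rw [mem_closedBall_zero_iff, ← hx.eq, norm_smul, Real.norm_of_nonneg (hχ_mem x).1]
    exact (mul_le_of_le_one_left (norm_nonneg _) (hχ_mem x).2).trans
      (mem_closedBall_iff_norm.1 (G (c + x)).2)
  have hcx : c + x ∈ closedBall c r := by simpa using hxr
  have hGx : (G (c + x) : E) = f (c + x) :=
    congr_arg Subtype.val (DFunLike.congr_fun hG ⟨c + x, hcx⟩)
  refine ⟨c + x, hcx, ?_⟩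
  have hx' : f (c + x) - c = x := by simpa [hχ_one hxr, hGx] using hx.eq
  exact sub_eq_iff_eq_add'.1 hx'

theorem closedBall_subset_image_closedBall_of_norm_sub_le {f : E → E} {c : E} {r δ : ℝ}
    (hr : 0 < r) (hf : ContinuousOn f (closedBall c r))
    (hδ : ∀ x ∈ closedBall c r, ‖f x - x‖ ≤ δ) :
    closedBall c (r - δ) ⊆ f '' closedBall c r := by
  intro y hy
  have hmaps : MapsTo (fun x ↦ y + (x - f x)) (closedBall c r) (closedBall c r) := fun x hx ↦ by
    rw [mem_closedBall_iff_norm] at hy ⊢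
    calc ‖y + (x - f x) - c‖ = ‖(y - c) - (f x - x)‖ := by congr 1; abel
      _ ≤ ‖y - c‖ + ‖f x - x‖ := norm_sub_le _ _
      _ ≤ r := by linarith [hδ x hx]
  obtain ⟨x, hx, hfix⟩ := exists_isFixedPt_of_mapsTo_closedBall hr
    (continuousOn_const.add (continuousOn_id.sub hf)) hmaps
  refine ⟨x, hx, ?_⟩
  have : y + (x - f x) = x := hfix
  rwa [add_sub_left_comm, add_eq_left, sub_eq_zero, eq_comm] at this

end Brouwer

section InfConvolution

/-- The inf-convolution `x ↦ inf_{y ∈ K} (f y + (1 / ε) * d x y)` of `f` over `K` with cost `d`,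
which approximates `f` on `K` as `ε → 0⁺`. The infimum is the real-valued one, hence `0` if `K` is
empty or the family is unbounded below. -/
noncomputable def infConvolution {X Y : Type*} (d : X → Y → ℝ) (K : Set Y) (f : Y → ℝ) (ε : ℝ)
    (x : X) : ℝ :=
  ⨅ y : K, (f y + 1 / ε * d x y)

theorem continuousOn_infConvolution {X Y : Type*} [TopologicalSpace X] [TopologicalSpace Y]
    {d : X → Y → ℝ} {S : Set X} {K : Set Y} {f : Y → ℝ} (hK : IsCompact K)
    (hf : ContinuousOn f K) (hd : ContinuousOn (Function.uncurry d) (S ×ˢ K)) (ε : ℝ) :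
    ContinuousOn (infConvolution d K f ε) S := by
  have := isCompact_iff_compactSpace.1 hK
  have hdSK : Continuous fun p : S × K ↦ d p.1 p.2 :=
    hd.comp_continuous (f := fun p : S × K ↦ ((p.1 : X), (p.2 : Y)))
      (by fun_prop) fun p ↦ ⟨p.1.2, p.2.2⟩
  have hcont : Continuous fun p : S × K ↦ f p.2 + 1 / ε * d p.1 p.2 :=
    (hf.domRestrict.comp continuous_snd).add (continuous_const.mul hdSK)
  have hinf := isCompact_univ.continuous_sInf (f := fun (x : S) (y : K) ↦ f y + 1 / ε * d x y) hcont
  simp only [image_univ] at hinf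
  exact continuousOn_iff_continuous_domRestrict.2 hinf

variable {X : Type*} [TopologicalSpace X] {d : X → X → ℝ} {K : Set X} {f : X → ℝ}

theorem exists_pos_forall_le_add_mul (hK : IsCompact K) (hf : ContinuousOn f K)
    (hd : ContinuousOn (Function.uncurry d) (K ×ˢ K)) (hnonneg : ∀ x ∈ K, ∀ y ∈ K, 0 ≤ d x y)
    (hpos : ∀ x ∈ K, ∀ y ∈ K, x ≠ y → 0 < d x y) {η : ℝ} (hη : 0 < η) :
    ∃ L > 0, ∀ x ∈ K, ∀ y ∈ K, f x ≤ f y + η + L * d x y := by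
  have := isCompact_iff_compactSpace.1 hK
  have hfst : Continuous fun p : K × K ↦ f p.1 := hf.domRestrict.comp continuous_fst
  have hsnd : Continuous fun p : K × K ↦ f p.2 := hf.domRestrict.comp continuous_snd
  have hdK : Continuous fun p : K × K ↦ d p.1 p.2 :=
    hd.comp_continuous (f := fun p : K × K ↦ ((p.1 : X), (p.2 : X)))
      (by fun_prop) fun p ↦ ⟨p.1.2, p.2.2⟩
  set far : Set (K × K) := {p | f p.2 + η ≤ f p.1} with hfar
  have hd_far : ∀ p ∈ far, 0 < d p.1 p.2 := fun p hp ↦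
    hpos _ p.1.2 _ p.2.2 fun h ↦ by
      rw [hfar, mem_ofPred_eq, h] at hp
      linarith
  have hfar_compact : IsCompact far := (isClosed_le (hsnd.add continuous_const) hfst).isCompact
  obtain ⟨M, hM⟩ := hfar_compact.bddAbove_image
    ((hfst.sub hsnd).continuousOn.div hdK.continuousOn fun p hp ↦ (hd_far p hp).ne')
  refine ⟨max M 1, by positivity, fun x hx y hy ↦ ?_⟩
  have hnn := mul_nonneg (zero_le_one.trans (le_max_right M 1)) (hnonneg x hx y hy)
  rcases le_total (f x) (f y + η) with h | h
  · linarith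
  · have hxy : (⟨x, hx⟩, ⟨y, hy⟩) ∈ far := h
    have hquot : (f x - f y) / d x y ≤ max M 1 :=
      (hM (mem_image_of_mem _ hxy)).trans (le_max_left M 1)
    rw [div_le_iff₀ (hd_far _ hxy)] at hquot
    linarith

theorem tendstoUniformlyOn_infConvolution (hK : IsCompact K) (hf : ContinuousOn f K)
    (hd : ContinuousOn (Function.uncurry d) (K ×ˢ K)) (hself : ∀ x ∈ K, d x x = 0)
    (hpos : ∀ x ∈ K, ∀ y ∈ K, x ≠ y → 0 < d x y) :
    TendstoUniformlyOn (infConvolution d K f) f (𝓝[>] 0) K := by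
  refine Metric.tendstoUniformlyOn_iff.2 fun η hη ↦ ?_
  have hnonneg : ∀ x ∈ K, ∀ y ∈ K, 0 ≤ d x y := fun x hx y hy ↦ by
    rcases eq_or_ne x y with rfl | h
    · exact (hself x hx).ge
    · exact (hpos x hx y hy h).le
  obtain ⟨L, hL, hle⟩ := exists_pos_forall_le_add_mul hK hf hd hnonneg hpos (half_pos hη)
  filter_upwards [Ioc_mem_nhdsGT (one_div_pos.2 hL)] with ε ⟨hε, hεL⟩ x hx
  have hlower (y : K) : f x - η / 2 ≤ f y + 1 / ε * d x y := by
    have hscale : L * d x y ≤ 1 / ε * d x y :=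
      mul_le_mul_of_nonneg_right ((le_one_div hL hε).2 hεL) (hnonneg x hx y y.2)
    linarith [hle x hx y y.2]
  have : Nonempty K := ⟨⟨x, hx⟩⟩
  have hge : f x - η / 2 ≤ infConvolution d K f ε x := le_ciInf hlower
  have hself_le : infConvolution d K f ε x ≤ f x :=
    (ciInf_le ⟨_, forall_mem_range.2 hlower⟩ ⟨x, hx⟩).trans_eq (by simp [hself x hx])
  rw [Real.dist_eq, abs_lt]
  constructor <;> linarith

end InfConvolution

theorem tendstoUniformlyOn_euclideanSpace {α κ ι : Type*} [Finite ι] {p : Filter κ} {s : Set α}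
    {F : κ → α → EuclideanSpace ℝ ι} {g : α → EuclideanSpace ℝ ι}
    (h : ∀ i, TendstoUniformlyOn (fun k x ↦ F k x i) (fun x ↦ g x i) p s) :
    TendstoUniformlyOn F g p s := by
  have := Fintype.ofFinite ι
  have hpi : TendstoUniformlyOn (fun k x ↦ (F k x).ofLp) (fun x ↦ (g x).ofLp) p s := by
    refine Metric.tendstoUniformlyOn_iff.2 fun η hη ↦ ?_
    filter_upwards [eventually_all.2 fun i ↦ Metric.tendstoUniformlyOn_iff.1 (h i) η hη]
      with k hk x hx
    exact (dist_pi_lt_iff hη).2 fun i ↦ hk i x hx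
  exact (PiLp.uniformContinuous_toLp 2 _).comp_tendstoUniformlyOn hpi

theorem exists_infConvolution_image_nonempty_interior_general {ι : Type*} [Fintype ι]
    {d : EuclideanSpace ℝ ι → EuclideanSpace ℝ ι → ℝ} {c : EuclideanSpace ℝ ι} {r : ℝ}
    (hr : 0 < r)
    (hd : ContinuousOn (Function.uncurry d) (closedBall c r ×ˢ closedBall c r))
    (hself : ∀ x ∈ closedBall c r, d x x = 0)
    (hpos : ∀ x ∈ closedBall c r, ∀ y ∈ closedBall c r, x ≠ y → 0 < d x y)
    {F : ℝ → EuclideanSpace ℝ ι → EuclideanSpace ℝ ι}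
    (hF : ∀ ε > 0, ∀ x ∈ closedBall c r, ∀ i,
      F ε x i = infConvolution d (closedBall c r) (fun z ↦ z i) ε x) :
    (∀ᶠ ε in 𝓝[>] 0, (interior (F ε '' closedBall c r)).Nonempty) ∧
    ∀ ε > 0, ∀ δ, (∀ x ∈ closedBall c r, ‖F ε x - x‖ ≤ δ) →
      closedBall c (r - δ) ⊆ F ε '' closedBall c r := by
  have hcompact : IsCompact (closedBall c r) := isCompact_closedBall c r
  have hcoord (i : ι) : ContinuousOn (fun z : EuclideanSpace ℝ ι ↦ z i) (closedBall c r) := by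
    fun_prop
  have hcont : ∀ ε > 0, ContinuousOn (F ε) (closedBall c r) := fun ε hε ↦ by
    have hpi : ContinuousOn (fun x ↦ (F ε x).ofLp) (closedBall c r) := continuousOn_pi.2 fun i ↦
      (continuousOn_infConvolution hcompact (hcoord i) hd ε).congr fun x hx ↦ hF ε hε x hx i
    exact (PiLp.continuous_toLp 2 _).comp_continuousOn hpi
  have hcover : ∀ ε > 0, ∀ δ, (∀ x ∈ closedBall c r, ‖F ε x - x‖ ≤ δ) →
      closedBall c (r - δ) ⊆ F ε '' closedBall c r := fun ε hε _ ↦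
    closedBall_subset_image_closedBall_of_norm_sub_le hr (hcont ε hε)
  refine ⟨?_, hcover⟩
  have htendsto : TendstoUniformlyOn F id (𝓝[>] 0) (closedBall c r) :=
    tendstoUniformlyOn_euclideanSpace fun i ↦
      (tendstoUniformlyOn_infConvolution hcompact (hcoord i) hd hself hpos).congr <|
        eventually_mem_nhdsWithin.mono fun ε hε x hx ↦ (hF ε hε x hx i).symm
  filter_upwards [Metric.tendstoUniformlyOn_iff.1 htendsto (r / 2) (half_pos hr),
    self_mem_nhdsWithin] with ε hclose hε
  have hball := hcover ε hε (r / 2) fun x hx ↦ by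
    simpa only [id, dist_comm x, dist_eq_norm] using (hclose x hx).le
  rw [sub_half] at hball
  exact ⟨c, mem_interior.2 ⟨ball c (r / 2), ball_subset_closedBall.trans hball, isOpen_ball,
    mem_ball_self (half_pos hr)⟩⟩

/-- Let `ρ` be a metric on `ℝⁿ` inducing the Euclidean topology, `𝔹` the closed Euclidean
unit ball, and for `ε > 0` let `F^ε = (π₁^ε, …, πₙ^ε)` where
`π_i^ε(x) = min_{z ∈ 𝔹} (π_i(z) + (1/ε) ρ(x,z))` are the inf-convolutions of the
coordinates of the identity. Then some `F^ε(𝔹)` has nonempty interior; more precisely,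
whenever `sup_{x ∈ 𝔹} ‖F^ε(x) − x‖ ≤ 1/2`, the open ball `B(0, 1/2)` is contained in
`F^ε(𝔹)`. -/
theorem exists_infConvolution_image_nonempty_interior (n : ℕ)
    (ρ : MetricSpace (EuclideanSpace ℝ (Fin n)))
    (hρ : ρ.toUniformSpace.toTopologicalSpace =
      (inferInstance : TopologicalSpace (EuclideanSpace ℝ (Fin n))))
    (F : ℝ → EuclideanSpace ℝ (Fin n) → EuclideanSpace ℝ (Fin n))
    (hF : ∀ (ε : ℝ) (x : EuclideanSpace ℝ (Fin n)) (i : Fin n),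
      F ε x i = ⨅ z : Metric.closedBall (0 : EuclideanSpace ℝ (Fin n)) 1,
        ((z : EuclideanSpace ℝ (Fin n)) i + (1 / ε) * ρ.dist x z)) :
    (∃ ε > (0 : ℝ),
      (interior (F ε '' Metric.closedBall (0 : EuclideanSpace ℝ (Fin n)) 1)).Nonempty) ∧
    ∀ ε > (0 : ℝ),
      (∀ x ∈ Metric.closedBall (0 : EuclideanSpace ℝ (Fin n)) 1, ‖F ε x - x‖ ≤ 1 / 2) →
      Metric.ball (0 : EuclideanSpace ℝ (Fin n)) (1 / 2) ⊆
        F ε '' Metric.closedBall (0 : EuclideanSpace ℝ (Fin n)) 1 := by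
  have hd : Continuous (Function.uncurry ρ.dist) := by
    have h := @continuous_dist _ ρ.toPseudoMetricSpace
    rwa [hρ] at h
  obtain ⟨hinterior, hcover⟩ := exists_infConvolution_image_nonempty_interior_general
    zero_lt_one hd.continuousOn (fun x _ ↦ ρ.dist_self x)
    (fun x _ y _ h ↦ (@dist_pos _ ρ x y).2 h) (fun ε _ x _ ↦ hF ε x)
  refine ⟨(hinterior.and self_mem_nhdsWithin).exists.imp fun ε h ↦ ⟨h.2, h.1⟩, fun ε hε h ↦ ?_⟩
  exact ball_subset_closedBall.trans (sub_half (1 : ℝ) ▸ hcover ε hε (1 / 2) h)
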